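/- Let k ≥ 1 be an integer and ζ > 0 a positive irrational real number. Set C := 1/2 if ζ ∈ (0, 1/2), and otherwise C := (1/2)·L_k(ζ)^{−1} − ε for an arbitrary fixed ε > 0, where L_k(ζ) := max_{1≤j≤k} j·ζ^{j−1}. Then there exists ẑ > 0 (depending on k, ζ, ε) such that for every integer z ≥ ẑ satisfying max_{1≤j≤k} ‖ζ^j·z‖ < C·z^{−1} the following holds: writing y_j for the nearest integer to ζ^j·z, and writing y₁/z = y₀/z₀ in lowest terms (gcd(y₀, z₀) = 1, z₀ > 0), we have that z₀^k divides z, and moreover (z, y₁, …, y_k) = M·(z₀^k, z₀^{k−1}·y₀, z₀^{k−2}·y₀², …, y₀^k) for some positive integer M. -/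

import Mathlib

open Filter Set

/-- `distNearestInt x` is the distance from `x` to the nearest integer. -/
noncomputable def distNearestInt (x : ℝ) : ℝ := |x - (round x : ℤ)|

/-- `Lk k t = max_{1≤j≤k} j·t^{j-1}`. -/
noncomputable def Lk (k : ℕ) (t : ℝ) : ℝ :=
  ⨆ j : Fin k, (((j : ℕ) : ℝ) + 1) * t ^ (j : ℕ)

/-!
Put `x = y₁ / z`. The vector `(y_j)` is within `1 / z` of the geometric progression `(z x^j)`:
passing from `ζ^j` to `x^j` multiplies the error `C / z` of `y₁` by about `j ζ^(j-1)`, so the total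
error is about `C (1 + j ζ^(j-1)) / z`, and `C (1 + j ζ^(j-1)) < 1` for `j ≥ 2`. If `y_j = z x^j`
exactly, then `z x^(j+1) = y_j x` has a denominator dividing that of `x`, which is at most `z`, so
an integer closer to it than `1 / z` equals it. By induction `z x^j` is an integer for all `j ≤ k`,
and the case `j = k` says that `z₀^k` divides `z`.
-/

open scoped Topology

section RationalProgression

variable {q : ℚ} {a n : ℤ}

theorem intCast_eq_mul_of_abs_sub_lt_inv_den (h : |(n : ℚ) - a * q| < (q.den : ℚ)⁻¹) :
    (n : ℚ) = a * q := by
  have hden : (0 : ℚ) < q.den := mod_cast q.den_pos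
  have hscaled : ((n * q.den - a * q.num : ℤ) : ℚ) = (n - a * q) * q.den := by
    push_cast
    rw [sub_mul, mul_assoc, q.mul_den_eq_num]
  have hlt : |((n * q.den - a * q.num : ℤ) : ℚ)| < 1 := by
    rwa [hscaled, abs_mul, abs_of_pos hden, ← lt_inv_mul_iff₀' hden, mul_one]
  have hzero : n * q.den - a * q.num = 0 := Int.abs_lt_one_iff.mp (mod_cast hlt)
  rw [hzero, Int.cast_zero, eq_comm, mul_eq_zero_iff_right hden.ne'] at hscaled
  exact sub_eq_zero.mp hscaled

theorem den_dvd_of_intCast_eq_mul (h : (n : ℚ) = a * q) : (q.den : ℤ) ∣ a := by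
  have hnum : n * q.den = a * q.num := by
    have : (n : ℚ) * q.den = a * q.num := by rw [h, mul_assoc, q.mul_den_eq_num]
    exact_mod_cast this
  exact (Rat.isCoprime_num_den q).symm.dvd_of_dvd_mul_right ⟨n, by rw [← hnum, mul_comm]⟩

theorem den_intCast_div_natCast_le (y : ℤ) {z : ℕ} (hz : 0 < z) : ((y : ℚ) / z).den ≤ z := by
  have hdvd : (((y : ℚ) / z).den : ℤ) ∣ z := by
    simpa only [Rat.divInt_eq_div, Int.cast_natCast] using Rat.den_dvd y z
  exact Nat.le_of_dvd hz (mod_cast hdvd)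

theorem den_pow_mul_pow (q : ℚ) {j k : ℕ} (hjk : j ≤ k) :
    (q.den : ℚ) ^ k * q ^ j = q.den ^ (k - j) * q.num ^ j := by
  rw [← Nat.sub_add_cancel hjk, pow_add, Nat.add_sub_cancel, mul_assoc, ← mul_pow,
    q.den_mul_eq_num]

variable {k : ℕ} {y : ℕ → ℤ}

theorem eq_geometric_of_abs_sub_lt_inv_den {c : ℚ} (h0 : y 0 = c)
    (h : ∀ j, 1 ≤ j → j ≤ k → |(y j : ℚ) - c * q ^ j| < (q.den : ℚ)⁻¹) :
    ∀ j ≤ k, (y j : ℚ) = c * q ^ j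
  | 0, _ => by rw [h0, pow_zero, mul_one]
  | j + 1, hj => by
    have ih := eq_geometric_of_abs_sub_lt_inv_den h0 h j (by omega)
    have hstep : c * q ^ (j + 1) = y j * q := by rw [ih, pow_succ, mul_assoc]
    have hclose := h (j + 1) j.succ_pos hj
    rw [hstep] at hclose ⊢
    exact intCast_eq_mul_of_abs_sub_lt_inv_den hclose

theorem exists_eq_mul_pow_of_eq_geometric {z : ℕ} (h : ∀ j ≤ k, (y j : ℚ) = z * q ^ j) :
    ∃ M : ℕ, z = M * q.den ^ k ∧ ∀ j ≤ k, y j = M * q.den ^ (k - j) * q.num ^ j := by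
  have hdvd : q.den ^ k ∣ z := by
    have := den_dvd_of_intCast_eq_mul (a := z) (mod_cast h k le_rfl)
    rw [Rat.den_pow] at this
    exact_mod_cast this
  obtain ⟨M, rfl⟩ := exists_eq_mul_left_of_dvd hdvd
  refine ⟨M, rfl, fun j hj => ?_⟩
  have hy : (y j : ℚ) = M * q.den ^ (k - j) * q.num ^ j := by
    rw [h j hj, Nat.cast_mul, Nat.cast_pow, mul_assoc, den_pow_mul_pow q hj, mul_assoc]
  exact_mod_cast hy

end RationalProgression

section Approximation

variable {k : ℕ} {ζ C : ℝ}

theorem tendsto_round_mul_div_atTop (ζ : ℝ) :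
    Tendsto (fun n : ℕ => (round (ζ * n) : ℝ) / n) atTop (𝓝 ζ) := by
  refine tendsto_iff_dist_tendsto_zero.mpr <| squeeze_zero' (.of_forall fun _ => dist_nonneg) ?_
    (tendsto_const_div_atTop_nhds_zero_nat (1 / 2 : ℝ))
  filter_upwards [eventually_gt_atTop 0] with n hn
  have hn' : (0 : ℝ) < n := mod_cast hn
  rw [Real.dist_eq, div_sub' hn'.ne', mul_comm, abs_div, abs_of_pos hn', abs_sub_comm]
  gcongr
  exact abs_sub_round _

theorem abs_sub_mul_div_pow_lt_inv {z y₁ y : ℝ} {j : ℕ} (hz : 0 < z)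
    (h₁ : |ζ * z - y₁| < C * z⁻¹) (h : |ζ ^ j * z - y| < C * z⁻¹)
    (hC : C * (1 + j * max |ζ| |y₁ / z| ^ (j - 1)) < 1) :
    |y - z * (y₁ / z) ^ j| < z⁻¹ := by
  set x := y₁ / z with hx
  set D := j * max |ζ| |x| ^ (j - 1)
  have hbase : z * |ζ - x| ≤ C * z⁻¹ := by
    rw [← abs_of_pos hz, ← abs_mul, abs_of_pos hz, mul_sub, mul_comm z ζ, hx,
      mul_div_cancel₀ _ hz.ne']
    exact h₁.le
  have hpow : z * |ζ ^ j - x ^ j| ≤ C * z⁻¹ * D :=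
    calc z * |ζ ^ j - x ^ j| ≤ z * (|ζ - x| * j * max |ζ| |x| ^ (j - 1)) := by
          gcongr
          exact abs_pow_sub_pow_le ..
      _ = z * |ζ - x| * D := by ring
      _ ≤ C * z⁻¹ * D := by gcongr
  calc |y - z * x ^ j| ≤ |y - ζ ^ j * z| + |ζ ^ j * z - z * x ^ j| := abs_sub_le ..
    _ = |ζ ^ j * z - y| + z * |ζ ^ j - x ^ j| := by
        rw [abs_sub_comm y, mul_comm (ζ ^ j) z, ← mul_sub, abs_mul z, abs_of_pos hz]
    _ ≤ C * z⁻¹ + C * z⁻¹ * D := add_le_add h.le hpow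
    _ = C * (1 + D) * z⁻¹ := by ring
    _ < 1 * z⁻¹ := by gcongr
    _ = z⁻¹ := one_mul _

theorem eventually_mul_one_add_lt_one
    (hC : ∀ j, 2 ≤ j → j ≤ k → C * (1 + j * |ζ| ^ (j - 1)) < 1) :
    ∀ᶠ z : ℕ in atTop, ∀ j, 2 ≤ j → j ≤ k →
      C * (1 + j * max |ζ| |(round (ζ * z) : ℝ) / z| ^ (j - 1)) < 1 := by
  have hev : ∀ᶠ x in 𝓝 ζ, ∀ j ∈ Finset.Icc 2 k, C * (1 + j * max |ζ| |x| ^ (j - 1)) < 1 := by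
    refine (eventually_all_finset _).mpr fun j hj => ?_
    obtain ⟨hj2, hjk⟩ := Finset.mem_Icc.mp hj
    have hcont : Continuous fun x : ℝ => C * (1 + j * max |ζ| |x| ^ (j - 1)) := by fun_prop
    exact hcont.continuousAt.eventually_lt_const (by simpa only [max_self] using hC j hj2 hjk)
  filter_upwards [(tendsto_round_mul_div_atTop ζ).eventually hev] with z hz j hj2 hjk
  exact hz j (Finset.mem_Icc.mpr ⟨hj2, hjk⟩)

theorem eventually_abs_round_sub_lt_inv
    (hC : ∀ j, 2 ≤ j → j ≤ k → C * (1 + j * |ζ| ^ (j - 1)) < 1) :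
    ∀ᶠ z : ℕ in atTop,
      (∀ j, 1 ≤ j → j ≤ k → distNearestInt (ζ ^ j * z) < C * (z : ℝ)⁻¹) →
      ∀ j, 1 ≤ j → j ≤ k →
        |(round (ζ ^ j * z) : ℝ) - z * ((round (ζ * z) : ℝ) / z) ^ j| < (z : ℝ)⁻¹ := by
  filter_upwards [eventually_mul_one_add_lt_one hC, eventually_gt_atTop 0] with z hCz hz h j hj1 hjk
  have hz' : (0 : ℝ) < z := mod_cast hz
  obtain rfl | hj2 := hj1.eq_or_lt
  · rw [pow_one, pow_one, mul_div_cancel₀ _ hz'.ne', sub_self, abs_zero]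
    exact inv_pos.mpr hz'
  · have h₁ := h 1 le_rfl (hj1.trans hjk)
    rw [pow_one] at h₁
    exact abs_sub_mul_div_pow_lt_inv hz' h₁ (h j hj1 hjk) (hCz j hj2 hjk)

theorem eventually_round_eq_geometric
    (hC : ∀ j, 2 ≤ j → j ≤ k → C * (1 + j * |ζ| ^ (j - 1)) < 1) :
    ∀ᶠ z : ℕ in atTop,
      (∀ j, 1 ≤ j → j ≤ k → distNearestInt (ζ ^ j * z) < C * (z : ℝ)⁻¹) →
      ∀ j ≤ k, (round (ζ ^ j * z) : ℚ) = z * ((round (ζ * z) : ℚ) / z) ^ j := by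
  filter_upwards [eventually_abs_round_sub_lt_inv hC, eventually_gt_atTop 0] with z hclose hz h
  have hround0 : (round (ζ ^ 0 * z) : ℚ) = z := by
    rw [pow_zero, one_mul, round_natCast, Int.cast_natCast]
  refine eq_geometric_of_abs_sub_lt_inv_den hround0 fun j hj1 hjk => ?_
  have hcloseQ : |(round (ζ ^ j * z) : ℚ) - z * ((round (ζ * z) : ℚ) / z) ^ j| < (z : ℚ)⁻¹ := by
    rw [← Rat.cast_lt (K := ℝ)]
    push_cast
    exact hclose h j hj1 hjk
  refine hcloseQ.trans_le (inv_anti₀ (Nat.cast_pos.mpr (Rat.den_pos _)) ?_)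
  exact Nat.cast_le.mpr (den_intCast_div_natCast_le _ hz)

end Approximation

section Threshold

variable {t : ℝ} {j k : ℕ}

theorem mul_pow_le_Lk (t : ℝ) (hj1 : 1 ≤ j) (hjk : j ≤ k) : j * t ^ (j - 1) ≤ Lk k t := by
  have hle := le_ciSup (f := fun i : Fin k => ((i : ℕ) + 1 : ℝ) * t ^ (i : ℕ))
    (finite_range _).bddAbove ⟨j - 1, by omega⟩
  rwa [← Nat.cast_add_one, Nat.sub_add_cancel hj1] at hle

theorem mul_pow_lt_one_of_lt_half (ht0 : 0 ≤ t) (ht : t < 1 / 2) (hj : 2 ≤ j) :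
    j * t ^ (j - 1) < 1 := by
  have hj_le : j ≤ 2 ^ (j - 1) := Nat.le_of_pred_lt Nat.lt_two_pow_self
  calc j * t ^ (j - 1) ≤ 2 ^ (j - 1) * t ^ (j - 1) := by
        gcongr
        exact_mod_cast hj_le
    _ = (2 * t) ^ (j - 1) := (mul_pow ..).symm
    _ < 1 := pow_lt_one₀ (by positivity) (by linarith) (by omega)

theorem half_inv_Lk_sub_mul_one_add_lt_one {ε : ℝ} (ht0 : 0 ≤ t) (hε : 0 < ε) (hj1 : 1 ≤ j)
    (hjk : j ≤ k) : (1 / 2 * (Lk k t)⁻¹ - ε) * (1 + j * t ^ (j - 1)) < 1 := by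
  have hL : 1 ≤ Lk k t := by simpa using mul_pow_le_Lk t le_rfl (hj1.trans hjk)
  calc (1 / 2 * (Lk k t)⁻¹ - ε) * (1 + j * t ^ (j - 1))
      < 1 / 2 * (Lk k t)⁻¹ * (1 + j * t ^ (j - 1)) := by
        gcongr
        exact sub_lt_self _ hε
    _ ≤ 1 / 2 * (Lk k t)⁻¹ * (Lk k t + Lk k t) := by
        gcongr
        exact mul_pow_le_Lk t hj1 hjk
    _ = 1 := by field_simp; norm_num

theorem threshold_mul_one_add_lt_one {ε : ℝ} (ht0 : 0 ≤ t) (hε : 0 < ε) (hj : 2 ≤ j)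
    (hjk : j ≤ k) :
    (if t < 1 / 2 then (1 / 2 : ℝ) else 1 / 2 * (Lk k t)⁻¹ - ε) * (1 + j * t ^ (j - 1)) < 1 := by
  split_ifs with ht
  · linarith [mul_pow_lt_one_of_lt_half ht0 ht hj]
  · exact half_inv_Lk_sub_mul_one_add_lt_one ht0 hε (one_le_two.trans hj) hjk

end Threshold

theorem structure_of_solutions_general (k : ℕ) (ζ ε : ℝ) (hε : 0 < ε) :
    ∃ zhat : ℕ, 0 < zhat ∧ ∀ z : ℕ, zhat ≤ z →
      (∀ j : ℕ, 1 ≤ j → j ≤ k →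
        distNearestInt (ζ ^ j * (z : ℝ)) <
          (if |ζ| < 1 / 2 then (1 / 2 : ℝ) else 1 / 2 * (Lk k |ζ|)⁻¹ - ε) * (z : ℝ)⁻¹) →
      ∃ (z₀ M : ℕ) (y₀ : ℤ), 0 < z₀ ∧ 0 < M ∧ Int.gcd y₀ (z₀ : ℤ) = 1 ∧
        (y₀ : ℝ) / (z₀ : ℝ) = ((round (ζ * (z : ℝ)) : ℤ) : ℝ) / (z : ℝ) ∧
        z₀ ^ k ∣ z ∧ z = M * z₀ ^ k ∧
        ∀ j : ℕ, 1 ≤ j → j ≤ k →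
          round (ζ ^ j * (z : ℝ)) = (M : ℤ) * (z₀ : ℤ) ^ (k - j) * y₀ ^ j := by
  obtain ⟨N, hN⟩ := eventually_atTop.mp <| eventually_round_eq_geometric (k := k) (ζ := ζ)
    fun j hj hjk => threshold_mul_one_add_lt_one (abs_nonneg ζ) hε hj hjk
  refine ⟨N + 1, N.succ_pos, fun z hz h => ?_⟩
  set q : ℚ := (round (ζ * z) : ℚ) / z with hq
  obtain ⟨M, hzM, hy⟩ := exists_eq_mul_pow_of_eq_geometric (hN z (by omega) h)
  have hM : 0 < M := Nat.pos_of_mul_pos_right (hzM ▸ (by omega : 0 < z))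
  have hfrac : (q.num : ℝ) / q.den = (round (ζ * z) : ℝ) / z := by
    rw [← Rat.cast_def, hq]
    push_cast
    rfl
  exact ⟨q.den, M, q.num, q.den_pos, hM, q.reduced, hfrac, Dvd.intro_left M hzM.symm, hzM,
    fun j _ hjk => hy j hjk⟩

/-- Structure of small solutions of `max_{1≤j≤k} ‖ζ^j·z‖ < C·z⁻¹`: for `ζ > 0`
irrational and `C = 1/2` if `ζ < 1/2`, `C = (1/2)·L_k(ζ)⁻¹ - ε` otherwise, every large
solution `z` satisfies: if `y₁/z = y₀/z₀` in lowest terms (`y_j` the nearest integer to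
`ζ^j·z`), then `z₀^k ∣ z` and `(z, y₁, …, y_k) = M·(z₀^k, z₀^{k-1}y₀, …, y₀^k)`. -/
theorem structure_of_solutions (k : ℕ) (hk : 1 ≤ k) (ζ : ℝ) (hζ0 : 0 < ζ)
    (hirr : Irrational ζ) (ε : ℝ) (hε : 0 < ε) :
    ∃ zhat : ℕ, 0 < zhat ∧ ∀ z : ℕ, zhat ≤ z →
      (∀ j : ℕ, 1 ≤ j → j ≤ k →
        distNearestInt (ζ ^ j * (z : ℝ)) <
          (if ζ < 1 / 2 then (1 / 2 : ℝ) else 1 / 2 * (Lk k ζ)⁻¹ - ε) * (z : ℝ)⁻¹) →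
      ∃ (z₀ M : ℕ) (y₀ : ℤ), 0 < z₀ ∧ 0 < M ∧ Int.gcd y₀ (z₀ : ℤ) = 1 ∧
        (y₀ : ℝ) / (z₀ : ℝ) = ((round (ζ * (z : ℝ)) : ℤ) : ℝ) / (z : ℝ) ∧
        z₀ ^ k ∣ z ∧ z = M * z₀ ^ k ∧
        ∀ j : ℕ, 1 ≤ j → j ≤ k →
          round (ζ ^ j * (z : ℝ)) = (M : ℤ) * (z₀ : ℤ) ^ (k - j) * y₀ ^ j := by
  simpa only [abs_of_pos hζ0] using structure_of_solutions_general k ζ ε hε
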